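/- Let k ≥ 1, σ_K ≥ 0, σ_U > 0, and let M be the k × k real matrix with diagonal entries M_{ii} = (k−1)σ_K² + σ_U² and off-diagonal entries M_{ij} = −σ_K² for i ≠ j. Then M is invertible and for every index i: Σ_{j=1}^{k} (M⁻¹_{ij})² M_{jj} = ((k−1)σ_K² + σ_U²) · ((k−1)σ_K⁴ + (σ_K² + σ_U²)²) / ((kσ_K² + σ_U²)² (σ_U²)²). -/

import Mathlib

/-- with homogeneous noise variances, the covariance matrix
`M` (diagonal `(k−1)σ_K² + σ_U²`, off-diagonal `−σ_K²`) is invertible and the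
privacy-loss variance quantity `Σ_j (M⁻¹_{ij})² M_{jj}` has the stated closed form. -/
theorem stmt_13 (k : ℕ) (hk : 1 ≤ k) (σK σU : ℝ) (hσK : 0 ≤ σK) (hσU : 0 < σU)
    (M : Matrix (Fin k) (Fin k) ℝ)
    (hMdiag : ∀ i, M i i = (k - 1 : ℝ) * σK ^ 2 + σU ^ 2)
    (hMoff : ∀ i j, i ≠ j → M i j = -σK ^ 2) :
    IsUnit M ∧ ∀ i, ∑ j, (M⁻¹ i j) ^ 2 * M j j =
      ((k - 1 : ℝ) * σK ^ 2 + σU ^ 2) * ((k - 1 : ℝ) * σK ^ 4 + (σK ^ 2 + σU ^ 2) ^ 2) /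
        (((k : ℝ) * σK ^ 2 + σU ^ 2) ^ 2 * (σU ^ 2) ^ 2) := by
  have hU : σU ^ 2 ≠ 0 := by positivity
  have hD : (k : ℝ) * σK ^ 2 + σU ^ 2 ≠ 0 := by positivity
  have hM : ∀ i j, M i j = (if i = j then (k : ℝ) * σK ^ 2 + σU ^ 2 else 0) - σK ^ 2 := by
    intro i j
    by_cases h : i = j
    · subst h
      rw [hMdiag, if_pos rfl]; ring
    · rw [hMoff i j h, if_neg h]; ring
  let B : Matrix (Fin k) (Fin k) ℝ := Matrix.of fun i j =>
    (if i = j then 1 / ((k : ℝ) * σK ^ 2 + σU ^ 2) else 0)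
      + σK ^ 2 / (σU ^ 2 * ((k : ℝ) * σK ^ 2 + σU ^ 2))
  have hMB : M * B = 1 := by
    ext i j
    simp only [Matrix.mul_apply, hM, B, Matrix.of_apply, sub_mul, mul_add,
      Finset.sum_sub_distrib, Finset.sum_add_distrib, ite_mul, mul_ite, zero_mul, mul_zero,
      Finset.sum_ite_eq, Finset.sum_ite_eq', Finset.mem_univ, if_true, Finset.sum_const,
      Finset.card_univ, Fintype.card_fin, nsmul_eq_mul, Matrix.one_apply]
    split_ifs <;> field_simp <;> ring
  have hinv : M⁻¹ = B := Matrix.inv_eq_right_inv hMB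
  refine ⟨IsUnit.of_mul_eq_one B hMB, fun i => ?_⟩
  have hsq : ∀ j, (M⁻¹ i j) ^ 2 * M j j =
      ((if i = j then (1 / ((k : ℝ) * σK ^ 2 + σU ^ 2)) ^ 2
        + 2 * (1 / ((k : ℝ) * σK ^ 2 + σU ^ 2)) *
          (σK ^ 2 / (σU ^ 2 * ((k : ℝ) * σK ^ 2 + σU ^ 2))) else 0)
      + (σK ^ 2 / (σU ^ 2 * ((k : ℝ) * σK ^ 2 + σU ^ 2))) ^ 2)
        * ((k - 1 : ℝ) * σK ^ 2 + σU ^ 2) := by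
    intro j
    rw [hMdiag, hinv]
    simp only [B, Matrix.of_apply]
    split_ifs <;> ring
  simp only [hsq]
  rw [← Finset.sum_mul, Finset.sum_add_distrib, Finset.sum_ite_eq]
  simp only [Finset.mem_univ, if_true, Finset.sum_const, Finset.card_univ, Fintype.card_fin,
    nsmul_eq_mul]
  field_simp
  ring
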